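/- arXiv:2211.07736 — 2 statements merged into one kernel-verified Lean document; each statement's English description precedes it below -/
import Mathlib

section
/- Let X be a complex Banach space, T a bounded linear operator on X, β an ordinal, and m ≥ 1 an integer. Then T is g_σ^{β+1}-invertible if and only if T^m is g_σ^{β+1}-invertible. -/
open Ordinal Set

/-- The `α`-th Cantor–Bendixson derivative of a set `A ⊆ ℂ`, defined by transfinite
recursion: `cbd A 0 = A`, `cbd A (β+1) = derivedSet (cbd A β)` (the set of accumulation
points of `cbd A β`), and `cbd A α = ⋂_{β < α} cbd A β` for limit ordinals `α`. -/
noncomputable def cbd (A : Set ℂ) (α : Ordinal) : Set ℂ :=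
  Ordinal.limitRecOn α A (fun _ ih => derivedSet ih)
    (fun α _ ih => ⋂ (β : Set.Iio α), ih β.1 β.2)

variable {X : Type*} [NormedAddCommGroup X] [NormedSpace ℂ X] [CompleteSpace X]

/-- The restriction `T_M` of a bounded operator `T` to a `T`-invariant subspace `M`. -/
noncomputable def restr (T : X →L[ℂ] X) (M : Submodule ℂ X)
    (hM : ∀ x ∈ M, T x ∈ M) : M →L[ℂ] M :=
  { toLinearMap := T.toLinearMap.restrict hM
    cont := (T.continuous.comp continuous_subtype_val).subtype_mk _ }


/-- `T` is `g_σ^{β+1}`-invertible: there is `(M, N) ∈ Red T` (a pair of closed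
`T`-invariant subspaces with `X = M ⊕ N`) such that `T_M` is invertible and
`acc^β σ(T_N) ⊆ {0}`. -/
def GInv (β : Ordinal) (T : X →L[ℂ] X) : Prop :=
  ∃ (M N : Submodule ℂ X) (hM : ∀ x ∈ M, T x ∈ M) (hN : ∀ x ∈ N, T x ∈ N),
    IsClosed (M : Set X) ∧ IsClosed (N : Set X) ∧ IsCompl M N ∧
    IsUnit (restr T M hM) ∧ cbd (spectrum ℂ (restr T N hN)) β ⊆ {0}


open Filter Topology

universe v

theorem cbd_zero (A : Set ℂ) : cbd A (0 : Ordinal.{v}) = A := by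
  simp [cbd, Ordinal.limitRecOn_zero]

theorem cbd_succ (A : Set ℂ) (β : Ordinal.{v}) : cbd A (β + 1) = derivedSet (cbd A β) := by
  simp only [cbd, Ordinal.limitRecOn_add_one]

theorem cbd_limit (A : Set ℂ) (α : Ordinal.{v}) (h : Order.IsSuccLimit α) :
    cbd A α = ⋂ (β : Set.Iio α), cbd A β.1 := by
  simp only [cbd]
  rw [Ordinal.limitRecOn_limit _ _ _ _ h]

theorem cbd_mono {A B : Set ℂ} (h : A ⊆ B) (β : Ordinal.{v}) : cbd A β ⊆ cbd B β := by
  induction β using Ordinal.limitRecOn with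
  | zero => simpa only [cbd_zero] using h
  | add_one o ih => rw [cbd_succ, cbd_succ]; exact derivedSet_mono _ _ ih
  | limit o ho ih =>
    rw [cbd_limit _ _ ho, cbd_limit _ _ ho]
    exact iInter_mono fun b => ih b.1 b.2

theorem cbd_closed {A : Set ℂ} (h : IsClosed A) (β : Ordinal.{v}) : IsClosed (cbd A β) := by
  induction β using Ordinal.limitRecOn with
  | zero => simpa only [cbd_zero] using h
  | add_one o ih => rw [cbd_succ]; exact isClosed_derivedSet _
  | limit o ho ih =>
    rw [cbd_limit _ _ ho]
    exact isClosed_iInter fun b => ih b.1 b.2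

theorem cbd_anti {A : Set ℂ} (h : IsClosed A) {γ β : Ordinal.{v}} (hle : γ ≤ β) :
    cbd A β ⊆ cbd A γ := by
  induction β using Ordinal.limitRecOn with
  | zero => rw [nonpos_iff_eq_zero.1 hle]
  | add_one o ih =>
    rcases hle.eq_or_lt with rfl | hlt
    · rfl
    · rw [cbd_succ]
      exact ((isClosed_iff_derivedSet_subset _).1 (cbd_closed h o)).trans
        (ih (by rwa [← Order.lt_add_one_iff]))
  | limit o ho ih =>
    rcases hle.eq_or_lt with rfl | hlt
    · rfl
    · rw [cbd_limit _ _ ho]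
      exact iInter_subset (fun b : Set.Iio o => cbd A b.1) ⟨γ, hlt⟩

theorem cbd_subset {A : Set ℂ} (h : IsClosed A) (β : Ordinal.{v}) : cbd A β ⊆ A := by
  have := cbd_anti h (zero_le (a := β))
  rwa [cbd_zero] at this

theorem cbd_inter_open (A U : Set ℂ) (hU : IsOpen U) (β : Ordinal.{v}) :
    cbd A β ∩ U ⊆ cbd (A ∩ U) β := by
  induction β using Ordinal.limitRecOn with
  | zero => simp only [cbd_zero]; rfl
  | add_one o ih =>
    rw [cbd_succ, cbd_succ]
    rintro x ⟨hx, hxU⟩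
    refine derivedSet_mono _ _ ih ?_
    rw [mem_derivedSet, accPt_iff_nhds] at hx ⊢
    intro V hV
    obtain ⟨y, hy, hne⟩ := hx (V ∩ U) (inter_mem hV (hU.mem_nhds hxU))
    exact ⟨y, ⟨hy.1.1, hy.2, hy.1.2⟩, hne⟩
  | limit o ho ih =>
    rw [cbd_limit _ _ ho, cbd_limit _ _ ho]
    rintro x ⟨hx, hxU⟩
    exact mem_iInter.2 fun b => ih b.1 b.2 ⟨mem_iInter.1 hx b, hxU⟩

theorem derivedSet_image_sub {B : Set ℂ} (hB : IsCompact B) (p : ℂ → ℂ) (hp : Continuous p) :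
    derivedSet (p '' B) ⊆ p '' (derivedSet B) := by
  intro w hw
  rw [mem_derivedSet, AccPt] at hw
  have hF : NeBot (comap p (𝓝[≠] w) ⊓ 𝓟 B) := by
    rw [← Filter.map_neBot_iff p, Filter.push_pull', Filter.map_principal]
    exact hw
  obtain ⟨a, ha, hcl⟩ := hB (f := comap p (𝓝[≠] w) ⊓ 𝓟 B) inf_le_right
  have hne : NeBot (𝓝 a ⊓ (comap p (𝓝[≠] w) ⊓ 𝓟 B)) := hcl
  have hpa : p a = w := by
    have h1 : Tendsto p (𝓝 a ⊓ (comap p (𝓝[≠] w) ⊓ 𝓟 B)) (𝓝 (p a)) :=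
      hp.continuousAt.mono_left inf_le_left
    have h2 : Tendsto p (𝓝 a ⊓ (comap p (𝓝[≠] w) ⊓ 𝓟 B)) (𝓝 w) :=
      (tendsto_comap.mono_left (inf_le_right.trans inf_le_left)).mono_right nhdsWithin_le_nhds
    exact tendsto_nhds_unique h1 h2
  refine ⟨a, ?_, hpa⟩
  rw [mem_derivedSet, AccPt]
  refine hne.mono ?_
  rw [nhdsWithin.eq_def a, inf_assoc]
  refine inf_le_inf le_rfl (inf_le_inf ?_ le_rfl)
  rw [le_principal_iff]
  refine ⟨{w}ᶜ, self_mem_nhdsWithin, ?_⟩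
  rintro x hx rfl
  exact hx hpa

theorem cbd_image_sub {A : Set ℂ} (hA : IsCompact A) (p : ℂ → ℂ) (hp : Continuous p)
    (β : Ordinal.{v}) : cbd (p '' A) β ⊆ p '' (cbd A β) := by
  induction β using Ordinal.limitRecOn with
  | zero => simp only [cbd_zero]; rfl
  | add_one o ih =>
    rw [cbd_succ, cbd_succ]
    refine (derivedSet_mono _ _ ih).trans (derivedSet_image_sub ?_ p hp)
    exact hA.of_isClosed_subset (cbd_closed hA.isClosed o) (cbd_subset hA.isClosed o)
  | limit o ho ih =>
    rw [cbd_limit _ _ ho, cbd_limit _ _ ho]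
    intro w hw
    have hcl : ∀ b : Set.Iio o, IsClosed (cbd A b.1 ∩ p ⁻¹' {w}) := fun b =>
      (cbd_closed hA.isClosed _).inter (isClosed_singleton.preimage hp)
    have : Nonempty (Set.Iio o) := ⟨⟨0, by simpa using ho.bot_lt⟩⟩
    have := IsCompact.nonempty_iInter_of_directed_nonempty_isCompact_isClosed
      (fun b : Set.Iio o => cbd A b.1 ∩ p ⁻¹' {w}) ?_ ?_ ?_ hcl
    · obtain ⟨a, ha⟩ := this
      rw [mem_iInter] at ha
      exact ⟨a, mem_iInter.2 fun b => (ha b).1, (ha (Classical.arbitrary _)).2⟩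
    · intro b c
      rcases le_total b c with h | h
      · exact ⟨c, inter_subset_inter_left _ (cbd_anti hA.isClosed h), le_rfl⟩
      · exact ⟨b, le_rfl, inter_subset_inter_left _ (cbd_anti hA.isClosed h)⟩
    · intro b
      obtain ⟨a, ha, h⟩ := ih b.1 b.2 (mem_iInter.1 hw b)
      exact ⟨a, ha, h⟩
    · intro b
      exact hA.of_isClosed_subset (hcl b) (inter_subset_left.trans (cbd_subset hA.isClosed _))

theorem cbd_image_sup (A : Set ℂ) (m : ℕ) (hm : 1 ≤ m)
    (β : Ordinal.{v}) : (fun z : ℂ => z ^ m) '' (cbd A β) ⊆ cbd ((fun z : ℂ => z ^ m) '' A) β := by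
  induction β using Ordinal.limitRecOn with
  | zero => simp only [cbd_zero]; rfl
  | add_one o ih =>
    rw [cbd_succ, cbd_succ]
    refine subset_trans ?_ (derivedSet_mono _ _ ih)
    rintro _ ⟨a, ha, rfl⟩
    rw [mem_derivedSet] at ha ⊢
    have hfin : Set.Finite {z : ℂ | z ^ m = a ^ m} := by
      have : {z : ℂ | z ^ m = a ^ m} ⊆ ((Polynomial.nthRoots m (a ^ m)).toFinset : Set ℂ) := by
        intro z hz
        simpa [Polynomial.mem_nthRoots (show 0 < m by omega)] using hz
      exact (Finset.finite_toSet _).subset this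
    rw [AccPt] at ha ⊢
    have ht : Tendsto (fun z : ℂ => z ^ m) (𝓝[≠] a ⊓ 𝓟 (cbd A o))
        (𝓝[≠] (a ^ m) ⊓ 𝓟 ((fun z : ℂ => z ^ m) '' (cbd A o))) := by
      refine tendsto_inf.2 ⟨Tendsto.mono_left ?_ inf_le_left,
        tendsto_principal.2 ?_⟩
      · refine tendsto_nhdsWithin_iff.2
          ⟨((continuous_pow m).tendsto a).mono_left nhdsWithin_le_nhds, ?_⟩
        have h2 : ({z : ℂ | z ^ m = a ^ m} \ {a})ᶜ ∈ 𝓝 a :=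
          (hfin.sdiff).isClosed.isOpen_compl.mem_nhds (by simp)
        filter_upwards [mem_nhdsWithin_of_mem_nhds h2, self_mem_nhdsWithin] with z hz hza h
        exact hz ⟨h, hza⟩
      · exact mem_of_superset (mem_inf_of_right (mem_principal_self _))
          fun z hz => mem_image_of_mem _ hz
    exact ht.neBot
  | limit o ho ih =>
    rw [cbd_limit _ _ ho, cbd_limit _ _ ho]
    rintro _ ⟨a, ha, rfl⟩
    exact mem_iInter.2 fun b => ih b.1 b.2 ⟨a, mem_iInter.1 ha b, rfl⟩

theorem countable_of_locally {s : Set ℂ} (h : ∀ x ∈ s, ∃ U ∈ 𝓝 x, (U ∩ s).Countable) :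
    s.Countable := by
  choose! U hU hc using h
  obtain ⟨t, hts, htc, hcov⟩ := TopologicalSpace.countable_cover_nhdsWithin (f := U) (s := s)
    fun x hx => mem_nhdsWithin_of_mem_nhds (hU x hx)
  refine (htc.biUnion fun x hx => hc x (hts hx)).mono ?_
  intro x hx
  obtain ⟨y, hy, hxy⟩ := mem_iUnion₂.1 (hcov hx)
  exact mem_iUnion₂.2 ⟨y, hy, hxy, hx⟩

theorem cbd_loc {A : Set ℂ} (hA : IsClosed A) (β : Ordinal.{v}) :
    ∀ x ∈ A \ cbd A β, ∃ U ∈ 𝓝 x, (U ∩ A).Countable := by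
  induction β using Ordinal.limitRecOn with
  | zero => simp [cbd_zero]
  | add_one o ih =>
    rintro x ⟨hxA, hx⟩
    by_cases hxo : x ∈ cbd A o
    · rw [cbd_succ, mem_derivedSet, accPt_iff_nhds] at hx
      push Not at hx
      obtain ⟨V, hV, hVx⟩ := hx
      refine ⟨V, hV, ?_⟩
      have : ((V ∩ A) \ {x}).Countable := by
        apply countable_of_locally
        rintro y ⟨⟨hyV, hyA⟩, hyx⟩
        obtain ⟨U, hU, hc⟩ := ih y ⟨hyA, fun hy => hyx (hVx y ⟨hyV, hy⟩)⟩
        exact ⟨U, hU, hc.mono (by rintro z ⟨h1, h2, h3⟩; exact ⟨h1, h2.2⟩)⟩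
      exact (this.union (countable_singleton x)).mono (by
        intro z hz
        by_cases h : z = x
        · exact Or.inr h
        · exact Or.inl ⟨hz, h⟩)
    · exact ih x ⟨hxA, hxo⟩
  | limit o ho ih =>
    rintro x ⟨hxA, hx⟩
    rw [cbd_limit _ _ ho, mem_iInter] at hx
    push Not at hx
    obtain ⟨b, hb⟩ := hx
    exact ih b.1 b.2 x ⟨hxA, hb⟩

theorem exists_radius {A : Set ℂ} (hA : IsClosed A) (β : Ordinal.{v}) {r : ℝ} (hr : 0 < r)
    (h : cbd A β ∩ Metric.closedBall 0 r ⊆ {0}) :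
    ∃ s, 0 < s ∧ s ≤ r ∧ ∀ z ∈ A, ‖z‖ ≠ s := by
  have hc : ((A ∩ Metric.closedBall 0 r) \ {0}).Countable := by
    apply countable_of_locally
    rintro x ⟨⟨hxA, hxr⟩, hx0⟩
    obtain ⟨U, hU, hc⟩ := cbd_loc hA β x ⟨hxA, fun hx => hx0 (h ⟨hx, hxr⟩)⟩
    exact ⟨U, hU, hc.mono (by rintro z ⟨h1, h2, h3⟩; exact ⟨h1, h2.1⟩)⟩
  have hc2 := hc.image (fun z => ‖z‖)
  have hn : ¬ (Set.Ioc 0 r ⊆ (fun z : ℂ => ‖z‖) '' ((A ∩ Metric.closedBall 0 r) \ {0})) := by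
    intro hs
    have h1 := hc2.mono hs
    have h2 := Cardinal.mk_Ioc_real hr
    rw [← Cardinal.le_aleph0_iff_set_countable, h2] at h1
    exact absurd h1 (not_le.2 Cardinal.aleph0_lt_continuum)
  obtain ⟨s, hs, hs2⟩ := not_subset.1 hn
  refine ⟨s, hs.1, hs.2, fun z hz hzs => hs2 ⟨z, ⟨⟨hz, by simpa [hzs] using hs.2⟩, ?_⟩, hzs⟩⟩
  rintro rfl
  simp at hzs
  exact absurd hs.1 (by simp [← hzs])

section Riesz

variable {R : Type*} [NormedRing R] [NormedAlgebra ℂ R] [CompleteSpace R]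

theorem inv_pair (y : R) (h1 : IsUnit (1 - y)) (h2 : IsUnit (1 + y)) :
    IsUnit (1 - y * y) ∧
    Ring.inverse (1 - y * y) = Ring.inverse (1 - y) * Ring.inverse (1 + y) ∧
    Ring.inverse (1 - y) + Ring.inverse (1 + y) = (2 : ℂ) • Ring.inverse (1 - y * y) := by
  have e : 1 - y * y = (1 + y) * (1 - y) := by noncomm_ring
  have e1 : Ring.inverse (1 - y * y) = Ring.inverse (1 - y) * Ring.inverse (1 + y) := by
    rw [e, Ring.inverse_mul (Or.inl h2)]
  refine ⟨by rw [e]; exact h2.mul h1, e1, ?_⟩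
  rw [e1]
  calc Ring.inverse (1 - y) + Ring.inverse (1 + y)
      = Ring.inverse (1 - y) * ((1 + y) * Ring.inverse (1 + y))
        + (Ring.inverse (1 - y) * (1 - y)) * Ring.inverse (1 + y) := by
        rw [Ring.mul_inverse_cancel _ h2, Ring.inverse_mul_cancel _ h1, mul_one, one_mul]
    _ = Ring.inverse (1 - y) * ((1 + y) + (1 - y)) * Ring.inverse (1 + y) := by noncomm_ring
    _ = (2 : ℂ) • (Ring.inverse (1 - y) * Ring.inverse (1 + y)) := by
        have : (1 + y) + (1 - y) = (2 : ℂ) • (1 : R) := by rw [two_smul]; abel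
        rw [this, mul_smul_comm, mul_one, smul_mul_assoc]

/-- The `k`-th inverse `(1 - e^{iθ} S^{2^k})⁻¹`. -/
noncomputable def rinv (S : R) (k : ℕ) (θ : ℝ) : R :=
  Ring.inverse (1 - Complex.exp (θ * Complex.I) • S ^ (2 ^ k))

theorem exp_half_sq (θ : ℝ) : Complex.exp ((θ / 2 : ℝ) * Complex.I) *
    Complex.exp ((θ / 2 : ℝ) * Complex.I) = Complex.exp (θ * Complex.I) := by
  rw [← Complex.exp_add]; congr 1; push_cast; ring

theorem exp_add_pi (θ : ℝ) : Complex.exp ((θ + Real.pi : ℝ) * Complex.I) =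
    - Complex.exp (θ * Complex.I) := by
  push_cast
  rw [add_mul, Complex.exp_add, Complex.exp_pi_mul_I]; ring

theorem rinv_step (S : R) (k : ℕ) (h : ∀ θ : ℝ, IsUnit (1 - Complex.exp (θ * Complex.I) • S ^ (2 ^ k)))
    (θ : ℝ) : IsUnit (1 - Complex.exp (θ * Complex.I) • S ^ (2 ^ (k + 1))) ∧
      rinv S (k + 1) θ = rinv S k (θ / 2) * rinv S k (θ / 2 + Real.pi) ∧
      rinv S k (θ / 2) + rinv S k (θ / 2 + Real.pi) = (2 : ℂ) • rinv S (k + 1) θ := by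
  have h1 := h (θ / 2)
  have h2 := h (θ / 2 + Real.pi)
  have e2 : 1 - Complex.exp ((θ / 2 + Real.pi : ℝ) * Complex.I) • S ^ (2 ^ k) =
      1 + Complex.exp ((θ / 2 : ℝ) * Complex.I) • S ^ (2 ^ k) := by
    rw [exp_add_pi, neg_smul, sub_neg_eq_add]
  have e3 : (Complex.exp ((θ / 2 : ℝ) * Complex.I) • S ^ (2 ^ k)) *
      (Complex.exp ((θ / 2 : ℝ) * Complex.I) • S ^ (2 ^ k)) =
      Complex.exp (θ * Complex.I) • S ^ (2 ^ (k + 1)) := by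
    rw [smul_mul_smul_comm, exp_half_sq, ← pow_add]; congr 2; ring
  rw [e2] at h2
  have := inv_pair _ h1 h2
  rw [e3] at this
  unfold rinv
  rw [e2]
  exact this

theorem rinv_unit (S : R) (h : ∀ θ : ℝ, IsUnit (1 - Complex.exp (θ * Complex.I) • S)) (k : ℕ) :
    ∀ θ : ℝ, IsUnit (1 - Complex.exp (θ * Complex.I) • S ^ (2 ^ k)) := by
  induction k with
  | zero => simpa using h
  | succ k ih => exact fun θ => (rinv_step S k ih θ).1

theorem rinv_lip (S : R) (h : ∀ θ : ℝ, IsUnit (1 - Complex.exp (θ * Complex.I) • S)) :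
    ∃ L : ℝ, ∀ (k : ℕ) (θ φ : ℝ), ‖rinv S k θ - rinv S k φ‖ ≤ L / 2 ^ k * |θ - φ| := by
  have hcont : Continuous fun θ : ℝ => rinv S 0 θ := by
    rw [continuous_iff_continuousAt]
    intro θ
    have h1 := NormedRing.inverse_continuousAt (rinv_unit S h 0 θ).unit
    rw [IsUnit.unit_spec] at h1
    refine ContinuousAt.comp (f := fun θ : ℝ => 1 - Complex.exp (θ * Complex.I) • S ^ (2 ^ 0)) h1 ?_
    fun_prop
  have hper : Function.Periodic (fun θ : ℝ => rinv S 0 θ) (2 * Real.pi) := by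
    intro θ
    simp only [rinv]
    congr 3
    push_cast
    rw [add_mul, Complex.exp_add, Complex.exp_two_pi_mul_I, mul_one]
  obtain ⟨B, hB⟩ := isCompact_Icc.exists_bound_of_continuousOn
    (s := Set.Icc 0 (2 * Real.pi)) hcont.continuousOn
  have hB' : ∀ θ, ‖rinv S 0 θ‖ ≤ B := by
    intro θ
    obtain ⟨y, hy, hxy⟩ := hper.exists_mem_Ico₀ Real.two_pi_pos θ
    rw [hxy]
    exact hB y ⟨hy.1, hy.2.le⟩
  have hB0 : 0 ≤ B := (norm_nonneg _).trans (hB' 0)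
  refine ⟨B * ‖S‖ * B, fun k => ?_⟩
  induction k with
  | zero =>
    intro θ φ
    have e : rinv S 0 θ - rinv S 0 φ =
        rinv S 0 θ * ((Complex.exp (θ * Complex.I) - Complex.exp (φ * Complex.I)) • S)
          * rinv S 0 φ := by
      have u1 := rinv_unit S h 0 θ
      have u2 := rinv_unit S h 0 φ
      have e1 : (Complex.exp (θ * Complex.I) - Complex.exp (φ * Complex.I)) • S =
          (1 - Complex.exp (φ * Complex.I) • S ^ (2 ^ 0)) -
          (1 - Complex.exp (θ * Complex.I) • S ^ (2 ^ 0)) := by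
        simp only [pow_zero, pow_one, sub_smul]; abel
      rw [e1, _root_.mul_sub, sub_mul, rinv, rinv, Ring.inverse_mul_cancel _ u1, mul_assoc,
        Ring.mul_inverse_cancel _ u2, mul_one, one_mul]
    have hexp : ‖Complex.exp (θ * Complex.I) - Complex.exp (φ * Complex.I)‖ ≤ |θ - φ| := by
      have e2 : Complex.exp (θ * Complex.I) - Complex.exp (φ * Complex.I) =
          Complex.exp (φ * Complex.I) * (Complex.exp (Complex.I * (θ - φ : ℝ)) - 1) := by
        rw [_root_.mul_sub, ← Complex.exp_add, mul_one]; congr 2; push_cast; ring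
      rw [e2, norm_mul, Complex.norm_exp_ofReal_mul_I, one_mul]
      exact Real.norm_exp_I_mul_ofReal_sub_one_le
    rw [e]
    calc _ ≤ ‖rinv S 0 θ‖ * (‖Complex.exp (θ * Complex.I) - Complex.exp (φ * Complex.I)‖ * ‖S‖)
          * ‖rinv S 0 φ‖ := by
          refine (norm_mul_le _ _).trans ?_
          gcongr
          refine (norm_mul_le _ _).trans ?_
          gcongr
          exact (norm_smul _ _).le
      _ ≤ B * (|θ - φ| * ‖S‖) * B := by
          gcongr
          · exact hB' θ
          · exact hB' φ
      _ = _ := by ring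
  | succ k ih =>
    intro θ φ
    have a1 := (rinv_step S k (rinv_unit S h k) θ).2.2
    have a2 := (rinv_step S k (rinv_unit S h k) φ).2.2
    have e : (2 : ℂ) • (rinv S (k + 1) θ - rinv S (k + 1) φ) =
        (rinv S k (θ / 2) - rinv S k (φ / 2)) +
        (rinv S k (θ / 2 + Real.pi) - rinv S k (φ / 2 + Real.pi)) := by
      rw [smul_sub, ← a1, ← a2]; abel
    have n1 := ih (θ / 2) (φ / 2)
    have n2 := ih (θ / 2 + Real.pi) (φ / 2 + Real.pi)
    have d1 : |θ / 2 - φ / 2| = |θ - φ| / 2 := by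
      rw [← sub_div, abs_div, abs_two]
    have d2 : |θ / 2 + Real.pi - (φ / 2 + Real.pi)| = |θ - φ| / 2 := by
      rw [← d1]; congr 1; ring
    rw [d1] at n1
    rw [d2] at n2
    have n3 := congrArg norm e
    rw [norm_smul, Complex.norm_two] at n3
    have n4 := norm_add_le (rinv S k (θ / 2) - rinv S k (φ / 2))
      (rinv S k (θ / 2 + Real.pi) - rinv S k (φ / 2 + Real.pi))
    have : B * ‖S‖ * B / 2 ^ (k + 1) * |θ - φ| = B * ‖S‖ * B / 2 ^ k * (|θ - φ| / 2) := by
      rw [pow_succ]; field_simp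
    rw [this]
    linarith

theorem ringInv_commute {a b : R} (h : Commute a b) : Commute (Ring.inverse a) b := by
  by_cases ha : IsUnit a
  · obtain ⟨u, rfl⟩ := ha
    rw [Ring.inverse_unit]
    exact h.units_inv_left
  · rw [Ring.inverse_non_unit _ ha]
    exact Commute.zero_left b

theorem riesz (S : R) (h : ∀ θ : ℝ, IsUnit (1 - Complex.exp (θ * Complex.I) • S)) :
    ∃ P : R, P * P = P ∧ Commute S P ∧ (∃ n, 1 ≤ n ∧ ‖S ^ n * P‖ < 1) ∧
      ∃ W : R, Commute S W ∧ Commute P W ∧ S * W * (1 - P) = 1 - P := by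
  obtain ⟨L, hL⟩ := rinv_lip S h
  have hu := rinv_unit S h
  have hstep := fun k => rinv_step S k (hu k) 0
  simp only [_root_.zero_div, _root_.zero_add] at hstep
  have hcau : CauchySeq fun k => rinv S k 0 := by
    refine cauchySeq_of_le_geometric_two (C := L * Real.pi) fun k => ?_
    have h1 := hL k 0 Real.pi
    have e : (2 : ℂ) • (rinv S k 0 - rinv S (k + 1) 0) = rinv S k 0 - rinv S k Real.pi := by
      rw [smul_sub, ← (hstep k).2.2, two_smul]; abel
    have n3 := congrArg norm e
    rw [norm_smul, Complex.norm_two] at n3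
    rw [_root_.zero_sub, abs_neg, abs_of_pos Real.pi_pos] at h1
    rw [dist_eq_norm]
    have : L * Real.pi / 2 / 2 ^ k = (L / 2 ^ k * Real.pi) / 2 := by ring
    rw [this]
    linarith
  obtain ⟨P, hP⟩ := cauchySeq_tendsto_of_complete hcau
  have hP1 : Tendsto (fun k => rinv S (k + 1) 0) atTop (𝓝 P) :=
    hP.comp (tendsto_add_atTop_nat 1)
  have hP2 : Tendsto (fun k => rinv S k Real.pi) atTop (𝓝 P) := by
    have e : (fun k => rinv S k Real.pi) = fun k => (2 : ℂ) • rinv S (k + 1) 0 - rinv S k 0 := by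
      funext k
      rw [← (hstep k).2.2]; abel
    rw [e]
    have := (hP1.const_smul (2 : ℂ)).sub hP
    rwa [two_smul, add_sub_cancel_right] at this
  have hPP : P * P = P := by
    refine tendsto_nhds_unique ?_ hP1
    have := hP.mul hP2
    refine this.congr fun k => ((hstep k).2.1).symm
  have hdef : ∀ k, rinv S k 0 = Ring.inverse (1 - S ^ (2 ^ k)) := by
    intro k; simp [rinv]
  have hu' : ∀ k, IsUnit (1 - S ^ (2 ^ k)) := by
    intro k; simpa using hu k 0
  have hcomm : ∀ Y, Commute S Y → ∀ k, Commute (rinv S k 0) Y := by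
    intro Y hY k
    rw [hdef]
    exact ringInv_commute ((Commute.one_left Y).sub_left (hY.pow_left _))
  have hSP : Commute S P := by
    have h1 := hP.const_mul S
    have h2 := hP.mul_const S
    exact tendsto_nhds_unique h1 (h2.congr fun k => (hcomm S (Commute.refl S) k).eq)
  have hSR : ∀ k, S ^ (2 ^ k) * rinv S k 0 = rinv S k 0 - 1 := by
    intro k
    have := Ring.mul_inverse_cancel _ (hu' k)
    rw [← hdef, sub_mul, one_mul] at this
    rw [← this]; abel
  have hRP := hcomm P hSP
  refine ⟨P, hPP, hSP, ?_, ?_⟩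
  · -- the norm estimate
    have t1 : Tendsto (fun k => rinv S k 0 * P + (1 - P)) atTop (𝓝 1) := by
      have := (hP.mul_const P).add_const (1 - P)
      rw [hPP, _root_.add_sub_cancel] at this
      exact this
    have t2 : Tendsto (fun k => Ring.inverse (rinv S k 0 * P + (1 - P))) atTop (𝓝 1) := by
      have h1 := (NormedRing.inverse_continuousAt (1 : Rˣ)).tendsto
      rw [Units.val_one, Ring.inverse_one] at h1
      exact h1.comp t1
    have t3 : Tendsto (fun k => (rinv S k 0 - 1) * P) atTop (𝓝 0) := by
      have := (hP.sub_const 1).mul_const P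
      rwa [sub_mul, hPP, one_mul, _root_.sub_self] at this
    have t4 := (t3.mul t2).norm
    rw [zero_mul, norm_zero] at t4
    have hev : ∀ᶠ k in atTop, IsUnit (rinv S k 0 * P + (1 - P)) :=
      t1.eventually (Units.nhds (1 : Rˣ))
    obtain ⟨k, hk1, hk2⟩ := (hev.and (t4.eventually (gt_mem_nhds one_pos))).exists
    refine ⟨2 ^ k, Nat.one_le_two_pow, ?_⟩
    refine lt_of_eq_of_lt (congrArg norm ?_) hk2
    rw [Ring.eq_mul_inverse_iff_mul_eq _ _ _ hk1, ← hSR]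
    have z : P * (1 - P) = 0 := by rw [_root_.mul_sub, hPP, mul_one, _root_.sub_self]
    rw [mul_assoc, _root_.mul_add, z, _root_.add_zero, ← mul_assoc P, ← (hRP k).eq, mul_assoc, hPP, mul_assoc]
  · -- invertibility on the complement
    have t1 : Tendsto (fun k => (rinv S k 0 - 1) * (1 - P) + P) atTop
        (𝓝 ((P - 1) * (1 - P) + P)) :=
      ((hP.sub_const 1).mul_const (1 - P)).add_const P
    have q : ((P - 1) * (1 - P) + P) * ((P - 1) * (1 - P) + P) = 1 := by
      have : (P - 1) * (1 - P) + P = P + P - 1 := by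
        rw [_root_.mul_sub, sub_mul P 1 P, hPP, mul_one, one_mul]; abel
      rw [this]
      rw [sub_mul, _root_.mul_sub, add_mul, _root_.mul_add, hPP, mul_one, one_mul]; abel
    have hev : ∀ᶠ k in atTop, IsUnit ((rinv S k 0 - 1) * (1 - P) + P) :=
      t1.eventually (Units.nhds (⟨_, _, q, q⟩ : Rˣ))
    obtain ⟨k, hk⟩ := hev.exists
    set U := (rinv S k 0 - 1) * (1 - P) + P with hU
    have cU : ∀ Y, Commute S Y → Commute P Y → Commute U Y := fun Y h1 h2 =>
      (((hcomm Y h1 k).sub_left (Commute.one_left Y)).mul_left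
        ((Commute.one_left Y).sub_left h2)).add_left h2
    have cS := ringInv_commute (cU S (Commute.refl S) hSP.symm)
    have cP := ringInv_commute (cU P hSP (Commute.refl P))
    have cR := hcomm S (Commute.refl S) k
    refine ⟨S ^ (2 ^ k - 1) * rinv S k 0 * Ring.inverse U, ?_, ?_, ?_⟩
    · exact (((Commute.refl S).pow_right _).mul_right cR.symm).mul_right cS.symm
    · exact ((hSP.symm.pow_right _).mul_right (hRP k).symm).mul_right cP.symm
    · have e1 : S * (S ^ (2 ^ k - 1) * rinv S k 0 * Ring.inverse U) * (1 - P) =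
          (rinv S k 0 - 1) * (1 - P) * Ring.inverse U := by
        rw [← mul_assoc, ← mul_assoc, ← pow_succ', Nat.sub_add_cancel Nat.one_le_two_pow, hSR,
          mul_assoc, mul_assoc, ((Commute.one_right _).sub_right cP).eq]
      rw [e1]
      symm
      rw [Ring.eq_mul_inverse_iff_mul_eq _ _ _ hk]
      have z : P * (1 - P) = 0 := by rw [_root_.mul_sub, hPP, mul_one, _root_.sub_self]
      have z1 : (1 - P) * (1 - P) = 1 - P := by rw [sub_mul, z, one_mul, _root_.sub_zero]
      have z2 : (1 - P) * P = 0 := by rw [sub_mul, hPP, one_mul, _root_.sub_self]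
      have c : Commute (1 - P) (rinv S k 0 - 1) :=
          ((Commute.one_left _).sub_left (hRP k).symm).sub_right (Commute.one_right _)
      rw [hU, _root_.mul_add, z2, _root_.add_zero, ← mul_assoc, c.eq, mul_assoc, z1]

end Riesz

theorem spec_closed {Y : Type*} [NormedAddCommGroup Y] [NormedSpace ℂ Y] [CompleteSpace Y]
    (A : Y →L[ℂ] Y) : IsClosed (spectrum ℂ A) := spectrum.isClosed A

theorem spec_bound {Y : Type*} [NormedAddCommGroup Y] [NormedSpace ℂ Y] [CompleteSpace Y]
    (A : Y →L[ℂ] Y) {s : ℝ} (hs : 0 ≤ s) {n : ℕ} (hn : 1 ≤ n)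
    (hnb : ∀ x, ‖(A ^ n) x‖ ≤ s ^ n * ‖x‖) {z : ℂ} (hz : z ∈ spectrum ℂ A) : ‖z‖ ≤ s := by
  have hb : ‖A ^ n‖ ≤ s ^ n := ContinuousLinearMap.opNorm_le_bound _ (by positivity) hnb
  have h1 := spectrum.norm_le_norm_mul_of_mem (spectrum.pow_mem_pow _ n hz)
  have h2 : ‖(1 : Y →L[ℂ] Y)‖ ≤ 1 := ContinuousLinearMap.norm_id_le
  have h3 : ‖z‖ ^ n ≤ s ^ n := by
    rw [← norm_pow]
    exact h1.trans ((mul_le_of_le_one_right (norm_nonneg _) h2).trans hb)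
  exact (pow_le_pow_iff_left₀ (norm_nonneg z) hs (by omega)).1 h3

theorem restr_sub (T : X →L[ℂ] X) (z : ℂ) (M : Submodule ℂ X) (hM : ∀ x ∈ M, T x ∈ M)
    (hM' : ∀ x ∈ M, (algebraMap ℂ (X →L[ℂ] X) z - T) x ∈ M) :
    restr (algebraMap ℂ (X →L[ℂ] X) z - T) M hM' =
      algebraMap ℂ (M →L[ℂ] M) z - restr T M hM := by
  ext x
  simp only [Algebra.algebraMap_eq_smul_one]
  rfl

theorem isUnit_iff_restr (T : X →L[ℂ] X) (M N : Submodule ℂ X) (hM : ∀ x ∈ M, T x ∈ M)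
    (hN : ∀ x ∈ N, T x ∈ N) (hMc : IsClosed (M : Set X)) (hNc : IsClosed (N : Set X))
    (h : IsCompl M N) :
    IsUnit T ↔ IsUnit (restr T M hM) ∧ IsUnit (restr T N hN) := by
  have : CompleteSpace M := hMc.completeSpace_coe
  have : CompleteSpace N := hNc.completeSpace_coe
  have hdec : ∀ x : X, ∃ a ∈ M, ∃ b ∈ N, a + b = x := by
    intro x
    have : x ∈ M ⊔ N := by rw [h.sup_eq_top]; trivial
    exact Submodule.mem_sup.1 this
  have huniq : ∀ a ∈ M, ∀ b ∈ N, a + b = 0 → a = 0 ∧ b = 0 := by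
    intro a ha b hb hab
    have h1 : a = -b := eq_neg_of_add_eq_zero_left hab
    have h2 : a = 0 := Submodule.disjoint_def.1 h.disjoint a ha (h1 ▸ N.neg_mem hb)
    exact ⟨h2, by simpa [h2] using hab⟩
  rw [ContinuousLinearMap.isUnit_iff_bijective, ContinuousLinearMap.isUnit_iff_bijective,
    ContinuousLinearMap.isUnit_iff_bijective]
  constructor
  · rintro ⟨hi, hs⟩
    refine ⟨⟨fun a b hab => Subtype.ext (hi (congrArg Subtype.val hab)), fun y => ?_⟩,
      ⟨fun a b hab => Subtype.ext (hi (congrArg Subtype.val hab)), fun y => ?_⟩⟩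
    · obtain ⟨x, hx⟩ := hs y
      obtain ⟨a, ha, b, hb, rfl⟩ := hdec x
      refine ⟨⟨a, ha⟩, Subtype.ext ?_⟩
      change T a = y
      have := huniq (T a - y) (M.sub_mem (hM a ha) y.2) (T b) (hN b hb)
        (by rw [← hx, map_add]; abel)
      exact sub_eq_zero.1 this.1
    · obtain ⟨x, hx⟩ := hs y
      obtain ⟨a, ha, b, hb, rfl⟩ := hdec x
      refine ⟨⟨b, hb⟩, Subtype.ext ?_⟩
      change T b = y
      have := huniq (T a) (hM a ha) (T b - y) (N.sub_mem (hN b hb) y.2)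
        (by rw [← hx, map_add]; abel)
      exact sub_eq_zero.1 this.2
  · rintro ⟨⟨hi1, hs1⟩, ⟨hi2, hs2⟩⟩
    refine ⟨(injective_iff_map_eq_zero T).2 fun x hx => ?_, fun y => ?_⟩
    · obtain ⟨a, ha, b, hb, rfl⟩ := hdec x
      rw [map_add] at hx
      obtain ⟨h1, h2⟩ := huniq _ (hM a ha) _ (hN b hb) hx
      have e1 : (⟨a, ha⟩ : M) = 0 := hi1 (by rw [map_zero]; exact Subtype.ext h1)
      have e2 : (⟨b, hb⟩ : N) = 0 := hi2 (by rw [map_zero]; exact Subtype.ext h2)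
      rw [show a = 0 from congrArg Subtype.val e1, show b = 0 from congrArg Subtype.val e2,
        _root_.add_zero]
    · obtain ⟨a, ha, b, hb, rfl⟩ := hdec y
      obtain ⟨a', h1⟩ := hs1 ⟨a, ha⟩
      obtain ⟨b', h2⟩ := hs2 ⟨b, hb⟩
      refine ⟨a' + b', ?_⟩
      rw [map_add]
      exact congrArg₂ (· + ·) (congrArg Subtype.val h1) (congrArg Subtype.val h2)

theorem spectrum_restr (T : X →L[ℂ] X) (M N : Submodule ℂ X) (hM : ∀ x ∈ M, T x ∈ M)
    (hN : ∀ x ∈ N, T x ∈ N) (hMc : IsClosed (M : Set X)) (hNc : IsClosed (N : Set X))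
    (h : IsCompl M N) :
    spectrum ℂ T = spectrum ℂ (restr T M hM) ∪ spectrum ℂ (restr T N hN) := by
  ext z
  have key : ∀ (K : Submodule ℂ X), (∀ x ∈ K, T x ∈ K) →
      ∀ x ∈ K, (algebraMap ℂ (X →L[ℂ] X) z - T) x ∈ K := by
    intro K hK x hx
    rw [Algebra.algebraMap_eq_smul_one]
    exact K.sub_mem (K.smul_mem z hx) (hK x hx)
  rw [mem_union, spectrum.mem_iff, spectrum.mem_iff, spectrum.mem_iff,
    ← restr_sub T z M hM (key M hM), ← restr_sub T z N hN (key N hN),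
    isUnit_iff_restr _ M N (key M hM) (key N hN) hMc hNc h]
  tauto

theorem gInv_iff (β : Ordinal.{v}) (T : X →L[ℂ] X) :
    GInv β T ↔ ∃ r : ℝ, 0 < r ∧ cbd (spectrum ℂ T) β ∩ Metric.closedBall 0 r ⊆ {0} := by
  constructor
  · rintro ⟨M, N, hM, hN, hMc, hNc, hc, hu, hsp⟩
    have : CompleteSpace M := hMc.completeSpace_coe
    have hcl : IsClosed (spectrum ℂ (restr T M hM)) :=
      spec_closed (Y := M) (restr T M hM)
    have hz0 : (0 : ℂ) ∉ spectrum ℂ (restr T M hM) := (spectrum.zero_notMem_iff ℂ).2 hu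
    have h0 : (spectrum ℂ (restr T M hM))ᶜ ∈ 𝓝 (0 : ℂ) :=
      hcl.isOpen_compl.mem_nhds hz0
    obtain ⟨r, hr, hball⟩ := Metric.mem_nhds_iff.1 h0
    refine ⟨r / 2, by positivity, ?_⟩
    have hsub : spectrum ℂ T ∩ Metric.ball 0 r ⊆ spectrum ℂ (restr T N hN) := by
      rw [spectrum_restr T M N hM hN hMc hNc hc]
      rintro z ⟨hz | hz, hzr⟩
      · exact absurd hz (hball hzr)
      · exact hz
    refine subset_trans ?_ hsp
    refine subset_trans ?_ (cbd_mono hsub β)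
    refine subset_trans ?_ (cbd_inter_open _ _ Metric.isOpen_ball β)
    exact inter_subset_inter_right _ (Metric.closedBall_subset_ball (by linarith))
  · rintro ⟨r, hr, h⟩
    obtain ⟨s, hs0, hsr, hs⟩ := exists_radius (spectrum.isClosed T) β hr h
    have hsc : (s : ℂ) ≠ 0 := by exact_mod_cast hs0.ne'
    obtain ⟨P, hPP, hSP, ⟨n, hn, hnorm⟩, W, hSW, hPW, hW⟩ := riesz ((s : ℂ)⁻¹ • T) (by
      intro θ
      set w : ℂ := Complex.exp (θ * Complex.I) with hw
      have hw0 : w ≠ 0 := Complex.exp_ne_zero _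
      have hw1 : ‖w‖ = 1 := Complex.norm_exp_ofReal_mul_I θ
      have hz : (s : ℂ) * w⁻¹ ∉ spectrum ℂ T := fun hz => hs _ hz (by
        rw [norm_mul, norm_inv, hw1, inv_one, mul_one, Complex.norm_real, Real.norm_of_nonneg hs0.le])
      rw [spectrum.notMem_iff] at hz
      have e : (1 : X →L[ℂ] X) - w • ((s : ℂ)⁻¹ • T) =
          (Units.mk0 (w * (s : ℂ)⁻¹) (by positivity)) •
            (algebraMap ℂ (X →L[ℂ] X) ((s : ℂ) * w⁻¹) - T) := by
        rw [Units.smul_mk0, smul_sub, Algebra.algebraMap_eq_smul_one, smul_smul, smul_smul]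
        congr 1
        rw [show w * (s : ℂ)⁻¹ * (s * w⁻¹) = 1 by field_simp, one_smul]
      rw [e]
      exact hz.smul _)
    have hTP : Commute T P := by
      have := hSP.smul_left (s : ℂ)
      rwa [smul_smul, mul_inv_cancel₀ hsc, one_smul] at this
    have hTW : Commute T W := by
      have := hSW.smul_left (s : ℂ)
      rwa [smul_smul, mul_inv_cancel₀ hsc, one_smul] at this
    have aTP : ∀ x, T (P x) = P (T x) := fun x => DFunLike.congr_fun hTP.eq x
    have aTW : ∀ x, T (W x) = W (T x) := fun x => DFunLike.congr_fun hTW.eq x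
    have aPW : ∀ x, P (W x) = W (P x) := fun x => DFunLike.congr_fun hPW.eq x
    have aPP : ∀ x, P (P x) = P x := fun x => DFunLike.congr_fun hPP x
    have aW : ∀ x, P x = 0 → (s : ℂ)⁻¹ • T (W x) = x := by
      intro x hx
      have := DFunLike.congr_fun hW x
      simpa [hx] using this
    let M : Submodule ℂ X := LinearMap.ker P.toLinearMap
    let N : Submodule ℂ X := LinearMap.ker (1 - P : X →L[ℂ] X).toLinearMap
    have memM : ∀ x, x ∈ M ↔ P x = 0 := fun x => Iff.rfl
    have memN : ∀ x, x ∈ N ↔ P x = x := fun x => by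
      change x - P x = 0 ↔ _
      rw [sub_eq_zero, eq_comm]
    have hM : ∀ x ∈ M, T x ∈ M := fun x hx => by
      rw [memM] at hx ⊢
      rw [← aTP, hx, map_zero]
    have hN : ∀ x ∈ N, T x ∈ N := fun x hx => by
      rw [memN] at hx ⊢
      rw [← aTP, hx]
    have hMc : IsClosed (M : Set X) := ContinuousLinearMap.isClosed_ker P
    have hNc : IsClosed (N : Set X) := ContinuousLinearMap.isClosed_ker (1 - P : X →L[ℂ] X)
    have hc : IsCompl M N := by
      constructor
      · rw [Submodule.disjoint_def]
        intro x h1 h2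
        rw [memM] at h1
        rw [memN] at h2
        rw [← h2, h1]
      · rw [codisjoint_iff, eq_top_iff]
        intro x _
        refine Submodule.mem_sup.2 ⟨x - P x, ?_, P x, ?_, by abel⟩
        · rw [memM, map_sub, aPP, _root_.sub_self]
        · rw [memN, aPP]
    have : CompleteSpace M := hMc.completeSpace_coe
    have : CompleteSpace N := hNc.completeSpace_coe
    refine ⟨M, N, hM, hN, hMc, hNc, hc, ?_, ?_⟩
    · rw [ContinuousLinearMap.isUnit_iff_bijective]
      refine ⟨(injective_iff_map_eq_zero _).2 fun x hx => Subtype.ext ?_, fun y => ?_⟩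
      · have h1 : T x = 0 := congrArg Subtype.val hx
        have h2 := aW x x.2
        rw [aTW, h1, map_zero, smul_zero] at h2
        exact h2.symm
      · have hy : P y = 0 := y.2
        refine ⟨⟨(s : ℂ)⁻¹ • W y, ?_⟩, Subtype.ext ?_⟩
        · rw [memM, map_smul, aPW, hy, map_zero, smul_zero]
        · change T ((s : ℂ)⁻¹ • W y) = y
          rw [map_smul]
          exact aW y hy
    · have hnb : ∀ x : N, ‖((restr T N hN) ^ n) x‖ ≤ s ^ n * ‖x‖ := by
        intro x
        have hpow : ∀ k : ℕ, (((restr T N hN) ^ k) x : X) = (T ^ k) x := by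
          intro k
          induction k with
          | zero => rfl
          | succ k ih =>
            rw [pow_succ', pow_succ']
            change T (((restr T N hN) ^ k) x : X) = T ((T ^ k) x)
            rw [ih]
        have hx : P x = x := (memN x).1 x.2
        have e : (T ^ n) x = (s : ℂ) ^ n • ((((s : ℂ)⁻¹ • T) ^ n * P) x) := by
          rw [smul_pow]
          change _ = (s : ℂ) ^ n • (((s : ℂ)⁻¹ ^ n) • (T ^ n) (P x))
          rw [hx, smul_smul, ← mul_pow, mul_inv_cancel₀ hsc, one_pow, one_smul]
        change ‖(((restr T N hN) ^ n) x : X)‖ ≤ s ^ n * ‖(x : X)‖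
        rw [hpow, e, norm_smul, norm_pow, Complex.norm_real, Real.norm_of_nonneg hs0.le]
        gcongr
        refine (ContinuousLinearMap.le_opNorm _ _).trans ?_
        exact mul_le_of_le_one_left (norm_nonneg _) hnorm.le
      have hsub : spectrum ℂ (restr T N hN) ⊆ spectrum ℂ T ∩ Metric.closedBall 0 s := by
        intro z hz
        refine ⟨by rw [spectrum_restr T M N hM hN hMc hNc hc]; exact Or.inr hz, ?_⟩
        have := spec_bound (Y := N) (restr T N hN) hs0.le hn hnb hz
        simpa using this
      intro z hz
      refine h ⟨cbd_mono (hsub.trans inter_subset_left) β hz, ?_⟩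
      exact Metric.closedBall_subset_closedBall hsr
        (hsub (cbd_subset (spec_closed (Y := N) (restr T N hN)) β hz)).2

/-- `T` is `g_σ^{β+1}`-invertible iff `T^m` is `g_σ^{β+1}`-invertible, for `m ≥ 1`. -/
theorem gInv_pow_iff (T : X →L[ℂ] X) (β : Ordinal) (m : ℕ) (hm : 1 ≤ m) :
    GInv β T ↔ GInv β (T ^ m) := by
  rw [gInv_iff, gInv_iff, spectrum.map_pow_of_pos T (show 0 < m by omega)]
  constructor
  · rintro ⟨r, hr, h⟩
    refine ⟨r ^ m, by positivity, ?_⟩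
    rintro w ⟨hw, hwr⟩
    obtain ⟨a, ha, rfl⟩ := cbd_image_sub (spectrum.isCompact T) _ (continuous_pow m) β hw
    have h1 : ‖a‖ ≤ r := by
      simp only [mem_closedBall_zero_iff, norm_pow] at hwr
      exact (pow_le_pow_iff_left₀ (norm_nonneg a) hr.le (by omega)).1 hwr
    have h2 : a = 0 := h ⟨ha, by simpa using h1⟩
    simp [h2, show m ≠ 0 by omega]
  · rintro ⟨r, hr, h⟩
    refine ⟨min r 1, by positivity, ?_⟩
    rintro a ⟨ha, har⟩
    have h1 : ‖a‖ ≤ min r 1 := by simpa using har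
    have h2 : ‖a‖ ^ m ≤ r := by
      refine le_trans ?_ (h1.trans (min_le_left _ _))
      exact pow_le_of_le_one (norm_nonneg _) (h1.trans (min_le_right _ _)) (by omega)
    have h3 : a ^ m = 0 := h ⟨cbd_image_sup _ m hm β ⟨a, ha, rfl⟩, by simpa using h2⟩
    exact eq_zero_of_pow_eq_zero h3
end

section
/- Let X be a complex Banach space, T a bounded linear operator on X, and β an ordinal. Then 0 ∉ acc^{β+1} σ(T) if and only if there exists a set σ̃ ⊆ σ(T) that is both closed and open in the subspace topology of σ(T), such that 0 ∉ σ(T) \ σ̃ and σ̃ \ {0} ⊆ σ(T) \ acc^β σ(T). -/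
open Ordinal Set

variable {X : Type*} [NormedAddCommGroup X] [NormedSpace ℂ X] [CompleteSpace X]

theorem cbd_zero_aux (A : Set ℂ) : cbd A 0 = A := by
  simp [cbd]

theorem cbd_succ_aux (A : Set ℂ) (α : Ordinal) : cbd A (α + 1) = derivedSet (cbd A α) := by
  unfold cbd
  exact Ordinal.limitRecOn_add_one ..

theorem cbd_limit_aux (A : Set ℂ) (α : Ordinal) (h : Order.IsSuccLimit α) :
    cbd A α = ⋂ (β : Set.Iio α), cbd A β.1 := by
  unfold cbd
  exact Ordinal.limitRecOn_limit _ _ _ _ h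

theorem cbd_subset_aux {A : Set ℂ} (hA : IsClosed A) (α : Ordinal) : cbd A α ⊆ A := by
  induction α using Ordinal.limitRecOn with
  | zero => rw [cbd_zero_aux]
  | add_one α ih =>
    rw [cbd_succ_aux]
    exact (derivedSet_mono _ _ ih).trans (isClosed_iff_derivedSet_subset A |>.1 hA)
  | limit α h ih =>
    rw [cbd_limit_aux _ _ h]
    have h0 : (0 : Ordinal) < α := by
      rcases eq_or_ne α 0 with rfl | h0
      · exact absurd (isMin_bot) h.not_isMin
      · exact pos_iff_ne_zero.2 h0
    intro x hx
    exact ih 0 h0 (mem_iInter.1 hx ⟨0, h0⟩)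

theorem perfect_subset_cbd_aux {A D : Set ℂ} (hD : Preperfect D) (hDA : D ⊆ A) (α : Ordinal) :
    D ⊆ cbd A α := by
  induction α using Ordinal.limitRecOn with
  | zero => rwa [cbd_zero_aux]
  | add_one α ih =>
    rw [cbd_succ_aux]
    exact (preperfect_iff_subset_derivedSet.1 hD).trans (derivedSet_mono _ _ ih)
  | limit α h ih =>
    rw [cbd_limit_aux _ _ h]
    exact subset_iInter fun b => ih b.1 b.2

theorem countable_diff_cbd_aux {A : Set ℂ} (hA : IsClosed A) (α : Ordinal) :
    (A \ cbd A α).Countable := by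
  obtain ⟨V, D, hV, hD, h⟩ := exists_countable_union_perfect_of_isClosed hA
  refine hV.mono ?_
  rintro x ⟨hx, hx'⟩
  have hDA : D ⊆ A := h ▸ subset_union_right
  rw [h] at hx
  exact hx.resolve_right fun hd => hx' (perfect_subset_cbd_aux hD.acc hDA α hd)

/-- `0 ∉ acc^{β+1} σ(T)` iff there is a spectral set `σ̃` of `T` (i.e. a subset of
`σ(T)` clopen in the subspace topology of `σ(T)`) such that `0 ∉ σ(T) \ σ̃` and
`σ̃ \ {0} ⊆ σ(T) \ acc^β σ(T)`. -/
theorem not_mem_cbd_succ_iff_exists_spectralSet (T : X →L[ℂ] X) (β : Ordinal) :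
    (0 : ℂ) ∉ cbd (spectrum ℂ T) (β + 1) ↔
      ∃ s : Set ℂ, s ⊆ spectrum ℂ T ∧
        IsClopen (Subtype.val ⁻¹' s : Set (spectrum ℂ T)) ∧
        (0 : ℂ) ∉ spectrum ℂ T \ s ∧
        s \ {0} ⊆ spectrum ℂ T \ cbd (spectrum ℂ T) β := by
  have hA : IsClosed (spectrum ℂ T) := spectrum.isClosed T
  have hsub := cbd_subset_aux hA β
  rw [cbd_succ_aux]
  generalize hK : cbd (spectrum ℂ T) β = K at *
  have hcnt : (spectrum ℂ T \ K).Countable := hK ▸ countable_diff_cbd_aux hA β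
  generalize spectrum ℂ T = A at *
  rw [mem_derivedSet, accPt_iff_nhds]
  constructor
  · intro h
    by_cases h0 : (0 : ℂ) ∈ A
    · push Not at h
      obtain ⟨U, hU, hUK⟩ := h
      obtain ⟨ε, hε, hεU⟩ := Metric.mem_nhds_iff.1 hU
      have hnc : ¬ (Ioo (0 : ℝ) ε ⊆ norm '' (A \ K)) := fun hh =>
        (Cardinal.Real.Ioo_countable_iff.not.2 (not_le.2 hε)) ((hcnt.image norm).mono hh)
      obtain ⟨r, ⟨hr0, hrε⟩, hr⟩ := not_subset.1 hnc
      have key : ∀ z ∈ A, ‖z‖ < ε → z ≠ 0 → z ∉ K := fun z hz hzε hz0 hzK =>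
        hz0 (hUK z ⟨hεU (by simpa using hzε), hzK⟩)
      have hne : ∀ z ∈ A, ‖z‖ ≠ r := by
        intro z hz hzr
        refine hr ⟨z, ⟨hz, key z hz (hzr ▸ hrε) ?_⟩, hzr⟩
        rintro rfl
        simp at hzr
        exact hr0.ne hzr
      refine ⟨A ∩ {z | ‖z‖ < r}, inter_subset_left, ⟨?_, ?_⟩, ?_, ?_⟩
      · have : (Subtype.val ⁻¹' (A ∩ {z | ‖z‖ < r}) : Set A) = {z : A | ‖(z : ℂ)‖ ≤ r} := by
          ext z
          have := hne z z.2
          simp only [mem_preimage, mem_inter_iff, z.2, true_and, mem_ofPred_eq]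
          exact ⟨le_of_lt, fun h => lt_of_le_of_ne h this⟩
        rw [this]
        exact isClosed_le (by fun_prop) (by fun_prop)
      · have : (Subtype.val ⁻¹' (A ∩ {z | ‖z‖ < r}) : Set A) = {z : A | ‖(z : ℂ)‖ < r} := by
          ext z
          simp
        rw [this]
        exact isOpen_lt (by fun_prop) (by fun_prop)
      · simp [h0, hr0]
      · rintro z ⟨⟨hz, hzr⟩, hz0⟩
        exact ⟨hz, key z hz (lt_trans hzr hrε) hz0⟩
    · exact ⟨∅, by simp, by simp [isClopen_empty], by simp [h0], by simp⟩
  · rintro ⟨s, hs, hcl, h0, hsK⟩ h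
    by_cases h0A : (0 : ℂ) ∈ A
    · have h0s : (0 : ℂ) ∈ s := by
        by_contra hh
        exact h0 ⟨h0A, hh⟩
      obtain ⟨U, hU, hUs⟩ := isOpen_induced_iff.1 hcl.isOpen
      have hmem : ∀ z ∈ A, (z ∈ U ↔ z ∈ s) := fun z hz => Set.ext_iff.1 hUs ⟨z, hz⟩
      obtain ⟨y, ⟨hyU, hyK⟩, hy0⟩ := h U (hU.mem_nhds ((hmem 0 h0A).2 h0s))
      exact (hsK ⟨(hmem y (hsub hyK)).1 hyU, hy0⟩).2 hyK
    · obtain ⟨y, ⟨hyU, hyK⟩, hy0⟩ := h Aᶜ (hA.isOpen_compl.mem_nhds h0A)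
      exact hyU (hsub hyK)
end
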